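/- arXiv:2110.00290 — 3 statements merged into one kernel-verified Lean document; each statement's English description precedes it below -/
import Mathlib

section
/- Block-matrix positivity implies the per-step quadratic dissipation inequality (Schur complement consequence): Let P ∈ ℝ^{n×n} be symmetric positive definite, γ > 0, and A ∈ ℝ^{n×n}, B ∈ ℝ^{n×m}, C ∈ ℝ^{p×n}, D ∈ ℝ^{p×m}. If the symmetric block matrix M = [[P, A P, B, 0], [P Aᵀ, P, 0, P Cᵀ], [Bᵀ, 0, γ I_m, Dᵀ], [0, C P, D, γ I_p]] is positive definite, then for all δx ∈ ℝ^n and δw ∈ ℝ^m, writing δx⁺ = A δx + B δw and δz = C δx + D δw, one has (δx⁺)ᵀ P⁻¹ δx⁺ − δxᵀ P⁻¹ δx ≤ γ ‖δw‖² − γ⁻¹ ‖δz‖², with strict inequality whenever (δx, δw) ≠ (0, 0). -/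
open Matrix

/-!
Grouping the outputs `(δx⁺, δz)` and the inputs `(P⁻¹ δx, δw)` turns the block matrix into
`[[N, G], [Gᵀ, Q]]` with `N = diag(P, γ I_p)`, `Q = diag(P, γ I_m)` and `G = [[A P, B], [C P, D]]`.
Its Schur complement `Q - Gᵀ N⁻¹ G` is positive definite, and `G (P⁻¹ δx, δw) = (δx⁺, δz)`, so
evaluating the Schur complement at `(P⁻¹ δx, δw)` gives the dissipation inequality.
-/

section SchurComplement

variable {m n : Type*}

section Ring

variable {R : Type*} [Ring R] [PartialOrder R] [StarRing R]
  {A : Matrix m m R} {B : Matrix m n R} {C : Matrix n m R} {D : Matrix n n R}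

theorem posDef_of_posDef_fromBlocks₁₁ (hM : (fromBlocks A B C D).PosDef) : A.PosDef :=
  hM.submatrix Sum.inl_injective

theorem posDef_of_posDef_fromBlocks₂₂ (hM : (fromBlocks A B C D).PosDef) : D.PosDef :=
  hM.submatrix Sum.inr_injective

end Ring

variable [Fintype m] [DecidableEq m]

theorem sumElim_dotProduct_inv_fromBlocks_zero_mulVec_sumElim {α : Type*} [CommRing α] [Fintype n]
    [DecidableEq n] {A : Matrix m m α} {D : Matrix n n α} (hAD : IsUnit A ↔ IsUnit D)
    (u u' : m → α) (v v' : n → α) :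
    Sum.elim u v ⬝ᵥ (fromBlocks A 0 0 D)⁻¹ *ᵥ Sum.elim u' v' =
      u ⬝ᵥ A⁻¹ *ᵥ u' + v ⬝ᵥ D⁻¹ *ᵥ v' := by
  simp [inv_fromBlocks_zero₂₁_of_isUnit_iff _ _ _ hAD, fromBlocks_mulVec]

variable {K : Type*} [Field K] [PartialOrder K] [StarRing K]
  {A : Matrix m m K} {B : Matrix m n K} {D : Matrix n n K}

theorem posDef_schurComplement_of_posDef_fromBlocks [Finite n]
    (hM : (fromBlocks A B Bᴴ D).PosDef) : (D - Bᴴ * A⁻¹ * B).PosDef := by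
  cases nonempty_fintype n
  have hA : A.PosDef := posDef_of_posDef_fromBlocks₁₁ hM
  let : Invertible A := hA.isUnit.invertible
  refine .of_dotProduct_mulVec_pos ((hA.isHermitian.fromBlocks₁₁ B D).mp hM.isHermitian) ?_
  intro y hy
  -- The first component cancels the completed square, leaving only the Schur complement term.
  have hv : Sum.elim (-((A⁻¹ * B) *ᵥ y)) y ≠ 0 := fun h =>
    hy (funext fun i => congrFun h (Sum.inr i))
  have hpos := hM.dotProduct_mulVec_pos hv
  rw [dotProduct_mulVec, schur_complement_eq₁₁ B D _ _ hA.isHermitian] at hpos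
  simpa [dotProduct_mulVec] using hpos

theorem dotProduct_inv_mulVec_lt_of_posDef_fromBlocks [Fintype n] [StarOrderedRing K]
    (hM : (fromBlocks A B Bᴴ D).PosDef) {y : n → K} (hy : y ≠ 0) :
    star (B *ᵥ y) ⬝ᵥ A⁻¹ *ᵥ (B *ᵥ y) < star y ⬝ᵥ D *ᵥ y := by
  have hpos := (posDef_schurComplement_of_posDef_fromBlocks hM).dotProduct_mulVec_pos hy
  rw [sub_mulVec, dotProduct_sub, sub_pos] at hpos
  simpa only [star_mulVec, ← dotProduct_mulVec, mulVec_mulVec, Matrix.mul_assoc] using hpos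

end SchurComplement

section Dissipation

variable {n n' m p K : Type*} [Fintype n]

theorem fromBlocks_submatrix_outputs_inputs [NonUnitalSemiring K] [StarRing K]
    {P : Matrix n n K} (hP : P.IsHermitian) (P' : Matrix n' n' K) (R : Matrix m m K)
    (S : Matrix p p K) (A : Matrix n' n K) (B : Matrix n' m K) (C : Matrix p n K)
    (D : Matrix p m K) :
    let e := (Equiv.sumSumSumComm n' p n m).trans ((Equiv.refl _).sumCongr (Equiv.sumComm p m))
    (fromBlocks (fromBlocks P' (A * P) (P * Aᴴ) P) (fromBlocks B 0 0 (P * Cᴴ))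
      (fromBlocks Bᴴ 0 0 (C * P)) (fromBlocks R Dᴴ D S)).submatrix e e =
    fromBlocks (fromBlocks P' 0 0 S) (fromBlocks (A * P) B (C * P) D)
      (fromBlocks (A * P) B (C * P) D)ᴴ (fromBlocks P 0 0 R) := by
  rw [fromBlocks_conjTranspose, conjTranspose_mul, conjTranspose_mul, hP.eq]
  ext ((_ | _) | (_ | _)) ((_ | _) | (_ | _)) <;> rfl

variable [Fintype n'] [Fintype m] [Fintype p] [DecidableEq n] [DecidableEq n'] [DecidableEq p]
  [Field K] [PartialOrder K] [StarRing K] [StarOrderedRing K]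
  {P : Matrix n n K} {P' : Matrix n' n' K} {R : Matrix m m K} {S : Matrix p p K}
  {A : Matrix n' n K} {B : Matrix n' m K} {C : Matrix p n K} {D : Matrix p m K}

theorem storage_add_output_lt_of_posDef_fromBlocks
    (hM : (fromBlocks (fromBlocks P' (A * P) (P * Aᴴ) P) (fromBlocks B 0 0 (P * Cᴴ))
      (fromBlocks Bᴴ 0 0 (C * P)) (fromBlocks R Dᴴ D S)).PosDef)
    {x : n → K} {w : m → K} (hxw : (x, w) ≠ (0, 0)) :
    star (A *ᵥ x + B *ᵥ w) ⬝ᵥ P'⁻¹ *ᵥ (A *ᵥ x + B *ᵥ w) +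
        star (C *ᵥ x + D *ᵥ w) ⬝ᵥ S⁻¹ *ᵥ (C *ᵥ x + D *ᵥ w) <
      star x ⬝ᵥ P⁻¹ *ᵥ x + star w ⬝ᵥ R *ᵥ w := by
  have hP : P.PosDef := posDef_of_posDef_fromBlocks₂₂ (posDef_of_posDef_fromBlocks₁₁ hM)
  have hP' : P'.PosDef := posDef_of_posDef_fromBlocks₁₁ (posDef_of_posDef_fromBlocks₁₁ hM)
  have hS : S.PosDef := posDef_of_posDef_fromBlocks₂₂ (posDef_of_posDef_fromBlocks₂₂ hM)
  have hPx : P *ᵥ P⁻¹ *ᵥ x = x := by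
    rw [mulVec_mulVec, mul_nonsing_inv P ((isUnit_iff_isUnit_det P).mp hP.isUnit), one_mulVec]
  have hv : Sum.elim (P⁻¹ *ᵥ x) w ≠ 0 := by
    intro h
    have hx : P⁻¹ *ᵥ x = 0 := funext fun i => congrFun h (Sum.inl i)
    have hw : w = 0 := funext fun i => congrFun h (Sum.inr i)
    exact hxw (by rw [← hPx, hx, mulVec_zero, hw])
  have hGv : fromBlocks (A * P) B (C * P) D *ᵥ Sum.elim (P⁻¹ *ᵥ x) w =
      Sum.elim (A *ᵥ x + B *ᵥ w) (C *ᵥ x + D *ᵥ w) := by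
    simp only [fromBlocks_mulVec, Sum.elim_comp_inl, Sum.elim_comp_inr,
      ← mulVec_mulVec, hPx]
  have hQv : star (Sum.elim (P⁻¹ *ᵥ x) w) ⬝ᵥ fromBlocks P 0 0 R *ᵥ Sum.elim (P⁻¹ *ᵥ x) w =
      star x ⬝ᵥ P⁻¹ *ᵥ x + star w ⬝ᵥ R *ᵥ w := by
    simp [fromBlocks_mulVec, Function.star_sumElim, hPx, star_mulVec, hP.isHermitian.inv.eq,
      dotProduct_mulVec]
  have hSchur := fromBlocks_submatrix_outputs_inputs hP.isHermitian P' R S A B C D ▸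
    hM.submatrix (Equiv.injective _)
  have hlt := dotProduct_inv_mulVec_lt_of_posDef_fromBlocks hSchur hv
  rwa [hGv, hQv, Function.star_sumElim,
    sumElim_dotProduct_inv_fromBlocks_zero_mulVec_sumElim (iff_of_true hP'.isUnit hS.isUnit)] at hlt

/-- The state may change dimension and storage matrix from `P` to `P'` along the step, and the
supply rate `wᴴ R w - zᴴ S⁻¹ z` replaces `γ ‖w‖² - γ⁻¹ ‖z‖²`. -/
theorem block_lmi_implies_step_dissipation_general
    (hM : (fromBlocks (fromBlocks P' (A * P) (P * Aᴴ) P) (fromBlocks B 0 0 (P * Cᴴ))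
      (fromBlocks Bᴴ 0 0 (C * P)) (fromBlocks R Dᴴ D S)).PosDef)
    (x : n → K) (w : m → K) :
    (star (A *ᵥ x + B *ᵥ w) ⬝ᵥ P'⁻¹ *ᵥ (A *ᵥ x + B *ᵥ w) - star x ⬝ᵥ P⁻¹ *ᵥ x ≤
      star w ⬝ᵥ R *ᵥ w - star (C *ᵥ x + D *ᵥ w) ⬝ᵥ S⁻¹ *ᵥ (C *ᵥ x + D *ᵥ w)) ∧
    ((x, w) ≠ (0, 0) →
      star (A *ᵥ x + B *ᵥ w) ⬝ᵥ P'⁻¹ *ᵥ (A *ᵥ x + B *ᵥ w) - star x ⬝ᵥ P⁻¹ *ᵥ x <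
        star w ⬝ᵥ R *ᵥ w - star (C *ᵥ x + D *ᵥ w) ⬝ᵥ S⁻¹ *ᵥ (C *ᵥ x + D *ᵥ w)) := by
  rw [sub_le_sub_iff, sub_lt_sub_iff, add_comm (star w ⬝ᵥ _)]
  refine ⟨?_, storage_add_output_lt_of_posDef_fromBlocks hM⟩
  rcases eq_or_ne (x, w) (0, 0) with hxw | hxw
  · obtain ⟨rfl, rfl⟩ := Prod.mk.inj hxw
    simp
  · exact (storage_add_output_lt_of_posDef_fromBlocks hM hxw).le

end Dissipation

/-- Block-matrix positivity implies the per-step quadratic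
dissipation inequality (Schur complement consequence).  If the symmetric block
matrix `M = [[P, AP, B, 0], [PAᵀ, P, 0, PCᵀ], [Bᵀ, 0, γI, Dᵀ], [0, CP, D, γI]]`
is positive definite (with `P` symmetric positive definite and `γ > 0`), then
for all `δx, δw`, writing `δx⁺ = A δx + B δw` and `δz = C δx + D δw`,
`(δx⁺)ᵀ P⁻¹ δx⁺ − δxᵀ P⁻¹ δx ≤ γ ‖δw‖² − γ⁻¹ ‖δz‖²`, strictly whenever
`(δx, δw) ≠ (0, 0)`. -/
theorem block_lmi_implies_step_dissipation
    (n m p : ℕ)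
    (P : Matrix (Fin n) (Fin n) ℝ) (hP : P.PosDef)
    (γ : ℝ) (hγ : 0 < γ)
    (A : Matrix (Fin n) (Fin n) ℝ) (B : Matrix (Fin n) (Fin m) ℝ)
    (C : Matrix (Fin p) (Fin n) ℝ) (D : Matrix (Fin p) (Fin m) ℝ)
    (hM : (Matrix.fromBlocks
        (Matrix.fromBlocks P (A * P) (P * Aᵀ) P)
        (Matrix.fromBlocks B 0 0 (P * Cᵀ))
        (Matrix.fromBlocks Bᵀ 0 0 (C * P))
        (Matrix.fromBlocks (γ • (1 : Matrix (Fin m) (Fin m) ℝ)) Dᵀ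
          D (γ • (1 : Matrix (Fin p) (Fin p) ℝ)))).PosDef) :
    ∀ δx : Fin n → ℝ, ∀ δw : Fin m → ℝ,
      ((A.mulVec δx + B.mulVec δw) ⬝ᵥ P⁻¹.mulVec (A.mulVec δx + B.mulVec δw)
          - δx ⬝ᵥ P⁻¹.mulVec δx ≤
        γ * (δw ⬝ᵥ δw)
          - γ⁻¹ * ((C.mulVec δx + D.mulVec δw) ⬝ᵥ (C.mulVec δx + D.mulVec δw))) ∧
      ((δx, δw) ≠ (0, 0) →
        (A.mulVec δx + B.mulVec δw) ⬝ᵥ P⁻¹.mulVec (A.mulVec δx + B.mulVec δw)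
            - δx ⬝ᵥ P⁻¹.mulVec δx <
          γ * (δw ⬝ᵥ δw)
            - γ⁻¹ * ((C.mulVec δx + D.mulVec δw) ⬝ᵥ (C.mulVec δx + D.mulVec δw))) := by
  have hinv : (γ • (1 : Matrix (Fin p) (Fin p) ℝ))⁻¹ = γ⁻¹ • 1 :=
    inv_eq_left_inv (by simp [hγ.ne'])
  simpa only [hinv, smul_mulVec, one_mulVec, dotProduct_smul, smul_eq_mul, star_trivial]
    using block_lmi_implies_step_dissipation_general hM
end

section
/- Incremental per-step dissipation from pointwise differential dissipation: Let X ⊆ ℝ^n and W ⊆ ℝ^m be open convex sets, and let f : X × W → X and h : X × W → ℝ^p be C¹. Let Q ∈ ℝ^{n×n} be symmetric positive definite and γ > 0, and suppose that for all (x, w) ∈ X × W and all δx ∈ ℝ^n, δw ∈ ℝ^m, the differential dissipation inequality holds: ((∂f/∂x)(x,w) δx + (∂f/∂w)(x,w) δw)ᵀ Q ((∂f/∂x)(x,w) δx + (∂f/∂w)(x,w) δw) − δxᵀ Q δx ≤ γ ‖δw‖² − γ⁻¹ ‖(∂h/∂x)(x,w) δx + (∂h/∂w)(x,w) δw‖².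 Let (x, w, z) and (x*, w*, z*) be two trajectories of x_{k+1} = f(x_k, w_k), z_k = h(x_k, w_k) with x₀, x₀* ∈ X and w_k, w*_k ∈ W for all k. Define the straight-line homotopy w̄_k(λ) = w*_k + λ(w_k − w*_k), x̄₀(λ) = x₀* + λ(x₀ − x₀*), x̄_{k+1}(λ) = f(x̄_k(λ), w̄_k(λ)), let δx_k(λ) = ∂x̄_k(λ)/∂λ, and set E_k = ∫₀¹ δx_k(λ)ᵀ Q δx_k(λ) dλ. Then for all k ∈ ℕ: E_{k+1} − E_k ≤ γ ‖w_k − w*_k‖² − γ⁻¹ ‖z_k − z*_k‖². -/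
open Matrix Set

/-!
Fix the time `k` and move along the homotopy parameter `t ∈ [0, 1]`. The chain rule shows that the
variation `δxₖ` obeys the linearised dynamics, so the differential inequality holds at every `t`;
integrating it leaves the supply rate of the output variation averaged over `t`. As a function of
the output variation the supply rate is concave, so by Jensen's inequality this average is at most
the supply rate of the mean output variation, which by the fundamental theorem of calculus is the
increment `zₖ - z*ₖ` between the endpoints of the homotopy.
-/

theorem intervalAverage_comp_deriv_le_comp_slope {G : Type*} [NormedAddCommGroup G]
    [NormedSpace ℝ G] [CompleteSpace G] {g : G → ℝ} {c c' : ℝ → G} {a b : ℝ} (hab : a < b)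
    (hg : ConcaveOn ℝ univ g) (hgc : Continuous g)
    (hc : ∀ t ∈ Icc a b, HasDerivAt c (c' t) t) (hc' : ContinuousOn c' (Icc a b)) :
    ⨍ t in a..b, g (c' t) ≤ g (slope c a b) := by
  have average_deriv : ⨍ t in a..b, c' t = slope c a b := by
    rw [interval_average_eq, intervalIntegral.integral_eq_sub_of_hasDerivAt
      (by rwa [uIcc_of_le hab.le]) (hc'.intervalIntegrable_of_Icc hab.le), slope_def_module]
  rw [← average_deriv]
  refine hg.le_map_set_average hgc.continuousOn isClosed_univ ?_ ?_ (by simp)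
    (hc'.intervalIntegrable_of_Icc hab.le).def'
    ((hgc.comp_continuousOn hc').intervalIntegrable_of_Icc hab.le).def' <;>
  simp [uIoc_of_le hab.le, hab]

theorem continuousOn_fderiv_apply_deriv {E G : Type*} [NormedAddCommGroup E] [NormedSpace ℝ E]
    [NormedAddCommGroup G] [NormedSpace ℝ G] {g : E → G} {S : Set E} {c c' : ℝ → E} {I : Set ℝ}
    (hS : IsOpen S) (hg : ContDiffOn ℝ 1 g S) (hmem : MapsTo c I S)
    (hc : ∀ t ∈ I, HasDerivAt c (c' t) t) (hc' : ContinuousOn c' I) :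
    ContinuousOn (fun t => fderiv ℝ g (c t) (c' t)) I :=
  ((hg.continuousOn_fderiv_of_isOpen hS le_rfl).comp
    (fun t ht => (hc t ht).continuousAt.continuousWithinAt) hmem).clm_apply hc'

theorem hasDerivAt_add_smul {E : Type*} [NormedAddCommGroup E] [NormedSpace ℝ E] (a v : E) (t : ℝ) :
    HasDerivAt (fun t : ℝ => a + t • v) v t := by
  simpa using ((hasDerivAt_id t).smul_const v).const_add a

theorem convexOn_dotProduct_self {ι : Type*} [Fintype ι] :
    ConvexOn ℝ univ fun v : ι → ℝ => v ⬝ᵥ v := by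
  simp only [dotProduct, ← sq]
  refine ⟨convex_univ, fun u _ v _ a b ha hb hab => ?_⟩
  simp only [Finset.smul_sum, ← Finset.sum_add_distrib]
  exact Finset.sum_le_sum fun i _ =>
    even_two.convexOn_pow.2 (mem_univ (u i)) (mem_univ (v i)) ha hb hab

/-- `x` is the state sequence of the discrete-time system `f` (taking a state and an input to the
next state) driven by the input sequence `w`. -/
def IsTrajectory {E F : Type*} (f : E × F → E) (w : ℕ → F) (x : ℕ → E) : Prop :=
  ∀ k, x (k + 1) = f (x k, w k)

namespace IsTrajectory

section Invariance

variable {E F : Type*} {f : E × F → E} {w : ℕ → F} {x y : ℕ → E}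

theorem mem {X : Set E} {W : Set F} (hx : IsTrajectory f w x) (hf : MapsTo f (X ×ˢ W) X)
    (hx0 : x 0 ∈ X) (hw : ∀ k, w k ∈ W) (k : ℕ) : x k ∈ X := by
  induction k with
  | zero => exact hx0
  | succ k ih => exact hx k ▸ hf ⟨ih, hw k⟩

theorem unique (hx : IsTrajectory f w x) (hy : IsTrajectory f w y) (h0 : x 0 = y 0) (k : ℕ) :
    x k = y k := by
  induction k with
  | zero => exact h0
  | succ k ih => rw [hx k, hy k, ih]

end Invariance

section Variation

variable {E F : Type*} [NormedAddCommGroup E] [NormedSpace ℝ E]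
  [NormedAddCommGroup F] [NormedSpace ℝ F] {f : E × F → E}
  {ω δω : ℕ → ℝ → F} {ξ δξ : ℕ → ℝ → E}

theorem variation_succ (hξ : ∀ t, IsTrajectory f (ω · t) (ξ · t)) {k : ℕ} {t : ℝ}
    (hf : DifferentiableAt ℝ f (ξ k t, ω k t)) (hδω : HasDerivAt (ω k) (δω k t) t)
    (hδξ : HasDerivAt (ξ k) (δξ k t) t) (hδξ_succ : HasDerivAt (ξ (k + 1)) (δξ (k + 1) t) t) :
    δξ (k + 1) t = fderiv ℝ f (ξ k t, ω k t) (δξ k t, δω k t) := by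
  have chain_rule : HasDerivAt (fun t => f (ξ k t, ω k t))
      (fderiv ℝ f (ξ k t, ω k t) (δξ k t, δω k t)) t :=
    hf.hasFDerivAt.comp_hasDerivAt t (hδξ.prodMk hδω)
  rw [← funext fun t => hξ t k] at chain_rule
  exact hδξ_succ.unique chain_rule

theorem continuousOn_variation {S : Set (E × F)} {I : Set ℝ} (hS : IsOpen S)
    (hf : ContDiffOn ℝ 1 f S) (hξ : ∀ t, IsTrajectory f (ω · t) (ξ · t))
    (hmem : ∀ k, ∀ t ∈ I, (ξ k t, ω k t) ∈ S)
    (hδω : ∀ k, ∀ t ∈ I, HasDerivAt (ω k) (δω k t) t) (hδωc : ∀ k, ContinuousOn (δω k) I)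
    (hδξ : ∀ k, ∀ t ∈ I, HasDerivAt (ξ k) (δξ k t) t) (hδξ0 : ContinuousOn (δξ 0) I) (k : ℕ) :
    ContinuousOn (δξ k) I := by
  induction k with
  | zero => exact hδξ0
  | succ k ih =>
    refine (continuousOn_fderiv_apply_deriv hS hf (hmem k)
      (fun t ht => (hδξ k t ht).prodMk (hδω k t ht)) (ih.prodMk (hδωc k))).congr fun t ht => ?_
    exact variation_succ hξ
      ((hf.differentiableOn one_ne_zero).differentiableAt (hS.mem_nhds (hmem k t ht)))
      (hδω k t ht) (hδξ k t ht) (hδξ (k + 1) t ht)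

end Variation

end IsTrajectory

section Dissipation

variable {E F G : Type*} [NormedAddCommGroup E] [NormedSpace ℝ E]
  [NormedAddCommGroup F] [NormedSpace ℝ F] [NormedAddCommGroup G] [NormedSpace ℝ G]
  {f : E × F → E} {h : E × F → G} {V : E → ℝ} {s : F → G → ℝ}

/-- Dissipativity of the linearisations of the system with dynamics `f` and output `h` at all points
of `S`: along one step the storage function `V` of the state variation grows by at most the supply
rate `s` of the input and output variations. -/
def DifferentiallyDissipativeOn (f : E × F → E) (h : E × F → G) (V : E → ℝ) (s : F → G → ℝ)
    (S : Set (E × F)) : Prop :=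
  ∀ q ∈ S, ∀ δx δw,
    V (fderiv ℝ f q (δx, δw)) - V δx ≤ s δw (fderiv ℝ h q (δx, δw))

theorem DifferentiallyDissipativeOn.integral_sub_integral_le [CompleteSpace G]
    {S : Set (E × F)} (hdiss : DifferentiallyDissipativeOn f h V s S) (hS : IsOpen S)
    (hf : ContDiffOn ℝ 1 f S) (hh : ContDiffOn ℝ 1 h S) (hV : Continuous V) {d : F}
    (hs : ConcaveOn ℝ univ (s d)) (hsc : Continuous (s d))
    {ξ ξ' : ℝ → E} {ω : ℝ → F} (hmem : ∀ t ∈ Icc (0 : ℝ) 1, (ξ t, ω t) ∈ S)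
    (hξ : ∀ t ∈ Icc (0 : ℝ) 1, HasDerivAt ξ (ξ' t) t)
    (hω : ∀ t ∈ Icc (0 : ℝ) 1, HasDerivAt ω d t)
    (hξ'c : ContinuousOn ξ' (Icc 0 1)) :
    (∫ t in (0 : ℝ)..1, V (fderiv ℝ f (ξ t, ω t) (ξ' t, d))) - ∫ t in (0 : ℝ)..1, V (ξ' t) ≤
      s d (h (ξ 1, ω 1) - h (ξ 0, ω 0)) := by
  let η' : ℝ → E := fun t => fderiv ℝ f (ξ t, ω t) (ξ' t, d)
  let ζ' : ℝ → G := fun t => fderiv ℝ h (ξ t, ω t) (ξ' t, d)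
  have curve_hasDerivAt : ∀ t ∈ Icc (0 : ℝ) 1, HasDerivAt (fun t => (ξ t, ω t)) (ξ' t, d) t :=
    fun t ht => (hξ t ht).prodMk (hω t ht)
  have output_hasDerivAt : ∀ t ∈ Icc (0 : ℝ) 1, HasDerivAt (fun t => h (ξ t, ω t)) (ζ' t) t :=
    fun t ht => ((hh.differentiableOn one_ne_zero).differentiableAt
      (hS.mem_nhds (hmem t ht))).hasFDerivAt.comp_hasDerivAt t (curve_hasDerivAt t ht)
  have variation_continuousOn : ContinuousOn (fun t => (ξ' t, d)) (Icc 0 1) :=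
    hξ'c.prodMk continuousOn_const
  have next_state_variation_continuousOn : ContinuousOn η' (Icc 0 1) :=
    continuousOn_fderiv_apply_deriv hS hf hmem curve_hasDerivAt variation_continuousOn
  have output_variation_continuousOn : ContinuousOn ζ' (Icc 0 1) :=
    continuousOn_fderiv_apply_deriv hS hh hmem curve_hasDerivAt variation_continuousOn
  have integrable_of_continuousOn {u : ℝ → ℝ} (hu : ContinuousOn u (Icc 0 1)) :
      IntervalIntegrable u MeasureTheory.volume 0 1 :=
    hu.intervalIntegrable_of_Icc zero_le_one
  have integrable_V_ξ' := integrable_of_continuousOn (hV.comp_continuousOn hξ'c)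
  have integrable_V_η' := integrable_of_continuousOn
    (hV.comp_continuousOn next_state_variation_continuousOn)
  calc (∫ t in (0 : ℝ)..1, V (η' t)) - ∫ t in (0 : ℝ)..1, V (ξ' t)
      = ∫ t in (0 : ℝ)..1, (V (η' t) - V (ξ' t)) :=
        (intervalIntegral.integral_sub integrable_V_η' integrable_V_ξ').symm
    _ ≤ ∫ t in (0 : ℝ)..1, s d (ζ' t) :=
        intervalIntegral.integral_mono_on zero_le_one (integrable_V_η'.sub integrable_V_ξ')
          (integrable_of_continuousOn (hsc.comp_continuousOn output_variation_continuousOn))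
          fun t ht => hdiss _ (hmem t ht) (ξ' t) d
    _ = ⨍ t in (0 : ℝ)..1, s d (ζ' t) := by rw [interval_average_eq]; simp
    _ ≤ s d (slope (fun t => h (ξ t, ω t)) 0 1) :=
        intervalAverage_comp_deriv_le_comp_slope zero_lt_one hs hsc output_hasDerivAt
          output_variation_continuousOn
    _ = s d (h (ξ 1, ω 1) - h (ξ 0, ω 0)) := by simp [slope_def_module]

theorem incremental_step_dissipation_general [CompleteSpace G] {X : Set E} {W : Set F}
    (hX : IsOpen X) (hWopen : IsOpen W) (hWconv : Convex ℝ W)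
    (hf : ContDiffOn ℝ 1 f (X ×ˢ W)) (hh : ContDiffOn ℝ 1 h (X ×ˢ W))
    (hfmaps : MapsTo f (X ×ˢ W) X) (hV : Continuous V)
    (hs : ∀ d, ConcaveOn ℝ univ (s d)) (hsc : ∀ d, Continuous (s d))
    (hdiss : DifferentiallyDissipativeOn f h V s (X ×ˢ W))
    {x xs : ℕ → E} {w ws : ℕ → F} (hw : ∀ k, w k ∈ W) (hws : ∀ k, ws k ∈ W)
    (hx : IsTrajectory f w x) (hxs : IsTrajectory f ws xs)
    {ξ δξ : ℕ → ℝ → E}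
    (hξ : ∀ t, IsTrajectory f (fun k => ws k + t • (w k - ws k)) (ξ · t))
    (hξ0 : ∀ t ∈ Icc (0 : ℝ) 1, ξ 0 t ∈ X) (hξ00 : ξ 0 0 = xs 0) (hξ01 : ξ 0 1 = x 0)
    (hδξ : ∀ k, ∀ t ∈ Icc (0 : ℝ) 1, HasDerivAt (ξ k) (δξ k t) t)
    (hδξ0 : ContinuousOn (δξ 0) (Icc 0 1)) (k : ℕ) :
    (∫ t in (0 : ℝ)..1, V (δξ (k + 1) t)) - ∫ t in (0 : ℝ)..1, V (δξ k t) ≤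
      s (w k - ws k) (h (x k, w k) - h (xs k, ws k)) := by
  let ω : ℕ → ℝ → F := fun k t => ws k + t • (w k - ws k)
  have hS : IsOpen (X ×ˢ W) := hX.prod hWopen
  have input_mem : ∀ t ∈ Icc (0 : ℝ) 1, ∀ k, ω k t ∈ W := fun t ht k =>
    hWconv.add_smul_sub_mem (hws k) (hw k) ht
  have curve_mem : ∀ k, ∀ t ∈ Icc (0 : ℝ) 1, (ξ k t, ω k t) ∈ X ×ˢ W := fun k t ht =>
    ⟨(hξ t).mem hfmaps (hξ0 t ht) (input_mem t ht) k, input_mem t ht k⟩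
  have input_hasDerivAt : ∀ k, ∀ t ∈ Icc (0 : ℝ) 1, HasDerivAt (ω k) (w k - ws k) t :=
    fun k t _ => hasDerivAt_add_smul (ws k) (w k - ws k) t
  have variation_continuousOn : ∀ k, ContinuousOn (δξ k) (Icc 0 1) :=
    IsTrajectory.continuousOn_variation hS hf hξ curve_mem input_hasDerivAt
      (fun _ => continuousOn_const) hδξ hδξ0
  have variation_step : ∀ t ∈ Icc (0 : ℝ) 1,
      δξ (k + 1) t = fderiv ℝ f (ξ k t, ω k t) (δξ k t, w k - ws k) := fun t ht =>
    IsTrajectory.variation_succ hξ (δω := fun k _ => w k - ws k)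
      ((hf.differentiableOn one_ne_zero).differentiableAt (hS.mem_nhds (curve_mem k t ht)))
      (input_hasDerivAt k t ht) (hδξ k t ht) (hδξ (k + 1) t ht)
  have state_at_one : ξ k 1 = x k := (hξ 1).unique (by simpa using hx) hξ01 k
  have state_at_zero : ξ k 0 = xs k := (hξ 0).unique (by simpa using hxs) hξ00 k
  have next_energy : ∫ t in (0 : ℝ)..1, V (δξ (k + 1) t) =
      ∫ t in (0 : ℝ)..1, V (fderiv ℝ f (ξ k t, ω k t) (δξ k t, w k - ws k)) :=
    intervalIntegral.integral_congr fun t ht =>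
      congrArg V (variation_step t (uIcc_of_le (zero_le_one' ℝ) ▸ ht))
  simpa [ω, next_energy, state_at_one, state_at_zero] using
    hdiss.integral_sub_integral_le hS hf hh hV (hs _) (hsc _) (curve_mem k) (hδξ k)
      (input_hasDerivAt k) (variation_continuousOn k)

end Dissipation

/-- Incremental per-step dissipation from pointwise differential
dissipation.  If the differential dynamics satisfy a pointwise quadratic
dissipation inequality with storage matrix `Q` and gain `γ` at every
`(x, w) ∈ X × W`, then along the straight-line homotopy between any two
trajectories the path energy `Eₖ = ∫₀¹ δxₖ(λ)ᵀ Q δxₖ(λ) dλ` satisfies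
`E_{k+1} − Eₖ ≤ γ ‖wₖ − w*ₖ‖² − γ⁻¹ ‖zₖ − z*ₖ‖²`. -/
theorem incremental_step_dissipation
    (n m p : ℕ)
    (X : Set (Fin n → ℝ)) (W : Set (Fin m → ℝ))
    (hXopen : IsOpen X) (hXconv : Convex ℝ X)
    (hWopen : IsOpen W) (hWconv : Convex ℝ W)
    (f : (Fin n → ℝ) × (Fin m → ℝ) → (Fin n → ℝ))
    (h : (Fin n → ℝ) × (Fin m → ℝ) → (Fin p → ℝ))
    (hf : ContDiffOn ℝ 1 f (X ×ˢ W)) (hh : ContDiffOn ℝ 1 h (X ×ˢ W))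
    (hfmaps : ∀ x ∈ X, ∀ w ∈ W, f (x, w) ∈ X)
    (Q : Matrix (Fin n) (Fin n) ℝ) (hQ : Q.PosDef)
    (γ : ℝ) (hγ : 0 < γ)
    -- pointwise differential dissipation inequality
    (hdiss : ∀ x ∈ X, ∀ w ∈ W, ∀ δx : Fin n → ℝ, ∀ δw : Fin m → ℝ,
      (fderiv ℝ f (x, w) (δx, 0) + fderiv ℝ f (x, w) (0, δw)) ⬝ᵥ
          Q.mulVec (fderiv ℝ f (x, w) (δx, 0) + fderiv ℝ f (x, w) (0, δw))
        - δx ⬝ᵥ Q.mulVec δx ≤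
      γ * (δw ⬝ᵥ δw)
        - γ⁻¹ * ((fderiv ℝ h (x, w) (δx, 0) + fderiv ℝ h (x, w) (0, δw)) ⬝ᵥ
            (fderiv ℝ h (x, w) (δx, 0) + fderiv ℝ h (x, w) (0, δw))))
    -- the two trajectories
    (x xs : ℕ → Fin n → ℝ) (w ws : ℕ → Fin m → ℝ) (z zs : ℕ → Fin p → ℝ)
    (hx0 : x 0 ∈ X) (hxs0 : xs 0 ∈ X)
    (hw : ∀ k, w k ∈ W) (hws : ∀ k, ws k ∈ W)
    (hxS : ∀ k, x (k + 1) = f (x k, w k)) (hz : ∀ k, z k = h (x k, w k))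
    (hxsS : ∀ k, xs (k + 1) = f (xs k, ws k)) (hzs : ∀ k, zs k = h (xs k, ws k))
    -- the straight-line homotopy
    (wbar : ℕ → ℝ → Fin m → ℝ)
    (hwbar : ∀ k t, wbar k t = ws k + t • (w k - ws k))
    (xbar : ℕ → ℝ → Fin n → ℝ)
    (hxbar0 : ∀ t, xbar 0 t = xs 0 + t • (x 0 - xs 0))
    (hxbarS : ∀ k t, xbar (k + 1) t = f (xbar k t, wbar k t))
    -- δxₖ(λ) = ∂x̄ₖ(λ)/∂λ
    (δx : ℕ → ℝ → Fin n → ℝ)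
    (hδx : ∀ k, ∀ t ∈ Set.Icc (0 : ℝ) 1, HasDerivAt (xbar k) (δx k t) t) :
    -- conclusion:  E_{k+1} − Eₖ ≤ γ ‖wₖ − w*ₖ‖² − γ⁻¹ ‖zₖ − z*ₖ‖²
    ∀ k : ℕ,
      (∫ t in (0 : ℝ)..1, δx (k + 1) t ⬝ᵥ Q.mulVec (δx (k + 1) t))
        - (∫ t in (0 : ℝ)..1, δx k t ⬝ᵥ Q.mulVec (δx k t)) ≤
      γ * ((w k - ws k) ⬝ᵥ (w k - ws k))
        - γ⁻¹ * ((z k - zs k) ⬝ᵥ (z k - zs k)) := by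
  have supply_concaveOn (d : Fin m → ℝ) :
      ConcaveOn ℝ univ fun v : Fin p → ℝ => γ * (d ⬝ᵥ d) - γ⁻¹ * (v ⬝ᵥ v) :=
    (concaveOn_const _ convex_univ).sub (convexOn_dotProduct_self.smul (inv_pos.2 hγ).le)
  have dissipative : DifferentiallyDissipativeOn f h (fun v => v ⬝ᵥ Q *ᵥ v)
      (fun d v => γ * (d ⬝ᵥ d) - γ⁻¹ * (v ⬝ᵥ v)) (X ×ˢ W) := fun q hq δx δw => by
    simpa [← map_add] using hdiss q.1 hq.1 q.2 hq.2 δx δw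
  have initial_variation (t : ℝ) (ht : t ∈ Icc (0 : ℝ) 1) : δx 0 t = x 0 - xs 0 :=
    (hδx 0 t ht).unique (funext hxbar0 ▸ hasDerivAt_add_smul _ _ t)
  intro k
  rw [hz, hzs]
  exact incremental_step_dissipation_general hXopen hWopen hWconv hf hh
    (fun q hq => hfmaps q.1 hq.1 q.2 hq.2) (by fun_prop) supply_concaveOn (fun d => by fun_prop)
    dissipative hw hws hxS hxsS (fun t k => (hxbarS k t).trans (by rw [hwbar]))
    (fun t ht => hxbar0 t ▸ hXconv.add_smul_sub_mem hxs0 hx0 ht)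
    (by simp [hxbar0]) (by simp [hxbar0]) hδx (continuousOn_const.congr initial_variation) k
end

section
/- Theorem 1 (ℓ_{i2}-gain analysis): Let X ⊆ ℝ^n and W ⊆ ℝ^m be open convex sets, and let f : X × W → X and h : X × W → ℝ^p be C¹. Suppose there exist a symmetric positive definite P ∈ ℝ^{n×n} and γ > 0 such that for all (x, w) ∈ X × W the block matrix [[P, A_δ(x,w) P, B_δ(x,w), 0], [P A_δ(x,w)ᵀ, P, 0, P C_δ(x,w)ᵀ], [B_δ(x,w)ᵀ, 0, γ I_m, D_δ(x,w)ᵀ], [0, C_δ(x,w) P, D_δ(x,w), γ I_p]] is positive definite, where A_δ = ∂f/∂x, B_δ = ∂f/∂w, C_δ = ∂h/∂x, D_δ = ∂h/∂w. Then the system x_{k+1} = f(x_k, w_k), z_k = h(x_k, w_k) has incremental ℓ₂-gain bounded by γ: for any two trajectories (x, w, z) and (x*, w*, z*) with x₀, x₀* ∈ X, w_k, w*_k ∈ W for all k, and w − w* square-summable, the sequence z − z* is square-summable and ‖z − z*‖₂ ≤ γ ‖w − w*‖₂ + ζ(x₀, x₀*), where ζ(a, b) = sqrt(γ (a − b)ᵀ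 P⁻¹ (a − b)); in particular ζ ≥ 0 and ζ(a, a) = 0. -/
open Matrix Set

/-!
The function `V d = dᵀ P⁻¹ d` is a storage function for the difference of two trajectories. Testing
the matrix inequality on `(-u, P⁻¹ d, e, -v)` bounds `2 (uᵀ (A d + B e) + vᵀ (C d + D e))` by
`uᵀ P u + γ vᵀ v + V d + γ eᵀ e`. The bounded quantity is linear in the Jacobians, so the scalar
mean value theorem on the segment between `(x, w)` and `(x*, w*)` transfers the bound from
differentials to increments of `f` and `h`. Only then are `u = P⁻¹ Δx⁺` and `v = γ⁻¹ Δz`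
chosen, which gives `V Δx⁺ + γ⁻¹ ‖Δz‖² ≤ V Δx + γ ‖Δw‖²`; summing over time yields the gain bound.
-/

section Dissipation

variable {V a b : ℕ → ℝ} {γ : ℝ}

lemma sum_range_le_of_dissipation (hV : ∀ k, 0 ≤ V k)
    (hstep : ∀ k, V (k + 1) + a k ≤ V k + b k) (N : ℕ) :
    ∑ k ∈ Finset.range N, a k ≤ V 0 + ∑ k ∈ Finset.range N, b k :=
  calc ∑ k ∈ Finset.range N, a k
      ≤ ∑ k ∈ Finset.range N, (V k - V (k + 1) + b k) :=
        Finset.sum_le_sum fun k _ => by linarith [hstep k]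
    _ = V 0 - V N + ∑ k ∈ Finset.range N, b k := by
        rw [Finset.sum_add_distrib, Finset.sum_range_sub']
    _ ≤ V 0 + ∑ k ∈ Finset.range N, b k := by linarith [hV N]

lemma summable_and_tsum_le_of_dissipation (hV : ∀ k, 0 ≤ V k) (ha : ∀ k, 0 ≤ a k)
    (hb : ∀ k, 0 ≤ b k) (hb_sum : Summable b) (hstep : ∀ k, V (k + 1) + a k ≤ V k + b k) :
    Summable a ∧ ∑' k, a k ≤ V 0 + ∑' k, b k := by
  have partial_sum_le (N : ℕ) : ∑ k ∈ Finset.range N, a k ≤ V 0 + ∑' k, b k :=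
    (sum_range_le_of_dissipation hV hstep N).trans <| by
      gcongr
      exact hb_sum.sum_le_tsum _ fun k _ => hb k
  exact ⟨summable_of_sum_range_le ha partial_sum_le,
    Real.tsum_le_of_sum_range_le ha partial_sum_le⟩

lemma sqrt_add_le_add_sqrt (s t : ℝ) : √(s + t) ≤ √s + √t := by
  rw [Real.sqrt_le_iff]
  refine ⟨by positivity, ?_⟩
  have le_sq_sqrt (r : ℝ) : r ≤ √r ^ 2 := (Real.sqrt_le_iff.1 le_rfl).2
  calc s + t ≤ √s ^ 2 + √t ^ 2 := add_le_add (le_sq_sqrt s) (le_sq_sqrt t)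
    _ ≤ (√s + √t) ^ 2 := pow_add_pow_le (by positivity) (by positivity) two_ne_zero

lemma summable_and_sqrt_tsum_le_of_dissipation (hγ : 0 < γ) (hV : ∀ k, 0 ≤ V k)
    (ha : ∀ k, 0 ≤ a k) (hb : ∀ k, 0 ≤ b k) (hb_sum : Summable b)
    (hstep : ∀ k, V (k + 1) + γ⁻¹ * a k ≤ V k + γ * b k) :
    Summable a ∧ √(∑' k, a k) ≤ γ * √(∑' k, b k) + √(γ * V 0) := by
  have scaled_step (k : ℕ) : γ * V (k + 1) + a k ≤ γ * V k + γ ^ 2 * b k :=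
    calc γ * V (k + 1) + a k = γ * (V (k + 1) + γ⁻¹ * a k) := by field_simp
      _ ≤ γ * (V k + γ * b k) := mul_le_mul_of_nonneg_left (hstep k) hγ.le
      _ = γ * V k + γ ^ 2 * b k := by ring
  obtain ⟨ha_sum, tsum_le⟩ := summable_and_tsum_le_of_dissipation
    (fun k => mul_nonneg hγ.le (hV k)) ha (fun k => mul_nonneg (sq_nonneg γ) (hb k))
    (hb_sum.mul_left _) scaled_step
  refine ⟨ha_sum, ?_⟩
  calc √(∑' k, a k) ≤ √(γ ^ 2 * ∑' k, b k + γ * V 0) := by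
        rw [← tsum_mul_left, add_comm]
        exact Real.sqrt_le_sqrt tsum_le
    _ ≤ √(γ ^ 2 * ∑' k, b k) + √(γ * V 0) := sqrt_add_le_add_sqrt _ _
    _ = γ * √(∑' k, b k) + √(γ * V 0) := by
        rw [Real.sqrt_mul (sq_nonneg γ), Real.sqrt_sq hγ.le]

end Dissipation

section MatrixInequality

variable {n m p : Type*} [Fintype n] [Fintype m] [Fintype p]

/-- The block matrix of the discrete-time bounded real lemma, in the form that is affine in the
system matrices `A, B, C, D` for a fixed inverse storage matrix `P` and gain `γ`. -/
def boundedRealMatrix [DecidableEq m] [DecidableEq p] (P A : Matrix n n ℝ) (B : Matrix n m ℝ)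
    (C : Matrix p n ℝ) (D : Matrix p m ℝ) (γ : ℝ) :
    Matrix ((n ⊕ n) ⊕ (m ⊕ p)) ((n ⊕ n) ⊕ (m ⊕ p)) ℝ :=
  fromBlocks (fromBlocks P (A * P) (P * Aᵀ) P) (fromBlocks B 0 0 (P * Cᵀ))
    (fromBlocks Bᵀ 0 0 (C * P)) (fromBlocks (γ • 1) Dᵀ D (γ • 1))

lemma dotProduct_boundedRealMatrix_mulVec [DecidableEq m] [DecidableEq p]
    {P : Matrix n n ℝ} (hP : P.IsSymm) (A : Matrix n n ℝ) (B : Matrix n m ℝ)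
    (C : Matrix p n ℝ) (D : Matrix p m ℝ) (γ : ℝ) (u s : n → ℝ) (e : m → ℝ) (v : p → ℝ) :
    Sum.elim (Sum.elim u s) (Sum.elim e v) ⬝ᵥ
        boundedRealMatrix P A B C D γ *ᵥ Sum.elim (Sum.elim u s) (Sum.elim e v) =
      u ⬝ᵥ P *ᵥ u + s ⬝ᵥ P *ᵥ s + γ * (e ⬝ᵥ e) + γ * (v ⬝ᵥ v) +
        2 * (u ⬝ᵥ (A *ᵥ P *ᵥ s + B *ᵥ e) + v ⬝ᵥ (C *ᵥ P *ᵥ s + D *ᵥ e)) := by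
  have move_P (y : n → ℝ) : s ⬝ᵥ P *ᵥ y = y ⬝ᵥ P *ᵥ s := by
    rw [← dotProduct_transpose_mulVec, hP.eq]
  have move_A : s ⬝ᵥ P *ᵥ Aᵀ *ᵥ u = u ⬝ᵥ A *ᵥ P *ᵥ s := by
    rw [move_P, dotProduct_comm, dotProduct_transpose_mulVec]
  have move_C : s ⬝ᵥ P *ᵥ Cᵀ *ᵥ v = v ⬝ᵥ C *ᵥ P *ᵥ s := by
    rw [move_P, dotProduct_comm, dotProduct_transpose_mulVec]
  simp only [boundedRealMatrix, fromBlocks_mulVec, Sum.elim_comp_inl, Sum.elim_comp_inr,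
    sumElim_dotProduct_sumElim, ← mulVec_mulVec, zero_mulVec, smul_mulVec, one_mulVec,
    dotProduct_add, dotProduct_zero, dotProduct_smul, smul_eq_mul, move_A, move_C,
    dotProduct_transpose_mulVec]
  ring

variable [DecidableEq n]

lemma mulVec_inv_mulVec_of_posDef {P : Matrix n n ℝ} (hP : P.PosDef) (d : n → ℝ) :
    P *ᵥ P⁻¹ *ᵥ d = d := by
  rw [mulVec_mulVec, mul_nonsing_inv _ hP.det_pos.ne'.isUnit, one_mulVec]

lemma two_mul_dotProduct_add_le_of_boundedRealMatrix_posSemidef [DecidableEq m] [DecidableEq p]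
    {P A : Matrix n n ℝ} {B : Matrix n m ℝ} {C : Matrix p n ℝ} {D : Matrix p m ℝ} {γ : ℝ}
    (hP : P.PosDef) (hM : (boundedRealMatrix P A B C D γ).PosSemidef)
    (u d : n → ℝ) (e : m → ℝ) (v : p → ℝ) :
    2 * (u ⬝ᵥ (A *ᵥ d + B *ᵥ e) + v ⬝ᵥ (C *ᵥ d + D *ᵥ e)) ≤
      u ⬝ᵥ P *ᵥ u + γ * (v ⬝ᵥ v) + (d ⬝ᵥ P⁻¹ *ᵥ d + γ * (e ⬝ᵥ e)) := by
  have quadratic_nonneg := hM.dotProduct_mulVec_nonneg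
    (Sum.elim (Sum.elim (-u) (P⁻¹ *ᵥ d)) (Sum.elim e (-v)))
  rw [star_trivial, dotProduct_boundedRealMatrix_mulVec (isHermitian_iff_isSymm.1 hP.isHermitian),
    mulVec_inv_mulVec_of_posDef hP, dotProduct_comm _ d] at quadratic_nonneg
  simp only [mulVec_neg, neg_dotProduct, dotProduct_neg] at quadratic_nonneg
  linarith

lemma dotProduct_inv_mulVec_add_le_of_forall_two_mul_dotProduct_le {P : Matrix n n ℝ}
    (hP : P.PosDef) {γ : ℝ} (hγ : γ ≠ 0) {a : n → ℝ} {b : p → ℝ} {c : ℝ}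
    (hdual : ∀ u v, 2 * (u ⬝ᵥ a + v ⬝ᵥ b) ≤ u ⬝ᵥ P *ᵥ u + γ * (v ⬝ᵥ v) + c) :
    a ⬝ᵥ P⁻¹ *ᵥ a + γ⁻¹ * (b ⬝ᵥ b) ≤ c := by
  have at_optimum := hdual (P⁻¹ *ᵥ a) (γ⁻¹ • b)
  rw [mulVec_inv_mulVec_of_posDef hP, dotProduct_comm _ a] at at_optimum
  simp only [smul_dotProduct, dotProduct_smul, smul_eq_mul, mul_inv_cancel_left₀ hγ] at at_optimum
  linarith

end MatrixInequality

section MeanValue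

lemma exists_mem_segment_apply_sub_eq {E F : Type*} [NormedAddCommGroup E] [NormedSpace ℝ E]
    [NormedAddCommGroup F] [NormedSpace ℝ F] {S : Set E} (hS : Convex ℝ S) {g : E → F}
    {g' : E → E →L[ℝ] F} (hg : ∀ q ∈ S, HasFDerivWithinAt g (g' q) S q) (φ : F →L[ℝ] ℝ)
    {a b : E} (ha : a ∈ S) (hb : b ∈ S) :
    ∃ q ∈ segment ℝ a b, φ (g b - g a) = φ (g' q (b - a)) := by
  simpa only [map_sub, Function.comp_apply, ContinuousLinearMap.comp_apply] using
    domain_mvt (fun q hq => φ.hasFDerivAt.comp_hasFDerivWithinAt q (hg q hq)) hS ha hb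

lemma exists_mem_segment_dotProduct_sub_add_eq {E n p : Type*} [NormedAddCommGroup E]
    [NormedSpace ℝ E] [Fintype n] [Fintype p] {S : Set E} (hS : Convex ℝ S) {f : E → n → ℝ}
    {h : E → p → ℝ} {f' : E → E →L[ℝ] n → ℝ} {h' : E → E →L[ℝ] p → ℝ}
    (hf : ∀ q ∈ S, HasFDerivWithinAt f (f' q) S q) (hh : ∀ q ∈ S, HasFDerivWithinAt h (h' q) S q)
    {a b : E} (ha : a ∈ S) (hb : b ∈ S) (u : n → ℝ) (v : p → ℝ) :
    ∃ q ∈ segment ℝ a b, u ⬝ᵥ (f b - f a) + v ⬝ᵥ (h b - h a) =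
      u ⬝ᵥ f' q (b - a) + v ⬝ᵥ h' q (b - a) :=
  exists_mem_segment_apply_sub_eq hS (fun q hq => (hf q hq).prodMk (hh q hq))
    ((dotProductBilin ℝ ℝ u).coprod (dotProductBilin ℝ ℝ v)).toContinuousLinearMap ha hb

end MeanValue

section Jacobian

variable {n m q : Type*} [Fintype n] [Fintype m]

/-- The linear map `(d, e) ↦ A d + B e` of the block row `[A B]`. Saying that it is the derivative
of a map at `(x, w)` means that `A` and `B` are the partial Jacobians there. -/
noncomputable def blockRowCLM (A : Matrix q n ℝ) (B : Matrix q m ℝ) :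
    (n → ℝ) × (m → ℝ) →L[ℝ] q → ℝ :=
  (A.mulVecLin.coprod B.mulVecLin).toContinuousLinearMap

lemma blockRowCLM_apply (A : Matrix q n ℝ) (B : Matrix q m ℝ) (d : (n → ℝ) × (m → ℝ)) :
    blockRowCLM A B d = A *ᵥ d.1 + B *ᵥ d.2 :=
  rfl

lemma blockRowCLM_of_single [DecidableEq n] [DecidableEq m]
    (L : (n → ℝ) × (m → ℝ) →L[ℝ] q → ℝ) :
    blockRowCLM (of fun i j => L (Pi.single j 1, 0) i) (of fun i j => L (0, Pi.single j 1) i) =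
      L := by
  apply ContinuousLinearMap.coe_injective
  ext j i <;> simp [blockRowCLM_apply]

lemma hasFDerivWithinAt_blockRowCLM_fderiv [DecidableEq n] [DecidableEq m]
    {S : Set ((n → ℝ) × (m → ℝ))} (hS : IsOpen S) {g : (n → ℝ) × (m → ℝ) → q → ℝ}
    (hg : DifferentiableOn ℝ g S) {y : (n → ℝ) × (m → ℝ)} (hy : y ∈ S) :
    HasFDerivWithinAt g
      (blockRowCLM (of fun i j => fderiv ℝ g y (Pi.single j 1, 0) i)
        (of fun i j => fderiv ℝ g y (0, Pi.single j 1) i)) S y := by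
  rw [blockRowCLM_of_single]
  exact (hg.differentiableAt (hS.mem_nhds hy)).hasFDerivAt.hasFDerivWithinAt

end Jacobian

section IncrementalGain

lemma trajectory_mem {α β : Type*} {X : Set α} {W : Set β} {f : α × β → α}
    (hf : ∀ x ∈ X, ∀ w ∈ W, f (x, w) ∈ X) {x : ℕ → α} {w : ℕ → β} (hx0 : x 0 ∈ X)
    (hw : ∀ k, w k ∈ W) (hx : ∀ k, x (k + 1) = f (x k, w k)) (k : ℕ) : x k ∈ X := by
  induction k with
  | zero => exact hx0
  | succ k ih => exact hx k ▸ hf _ ih _ (hw k)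

variable {n m p : Type*}

/-- The incremental ℓ₂-gain of the system `x⁺ = f (x, w)`, `z = h (x, w)` on `X × W` is bounded by
`γ` with offset `ζ`. Initial states are taken in `X` and inputs in `W`, and square-summability of
the output difference is part of the claim, since `∑'` of a divergent series is `0`. -/
def HasIncrementalL2Gain [Fintype m] [Fintype p] (f : (n → ℝ) × (m → ℝ) → n → ℝ)
    (h : (n → ℝ) × (m → ℝ) → p → ℝ) (X : Set (n → ℝ)) (W : Set (m → ℝ)) (γ : ℝ)
    (ζ : (n → ℝ) → (n → ℝ) → ℝ) : Prop :=
  (∀ x xs : ℕ → n → ℝ, ∀ w ws : ℕ → m → ℝ, ∀ z zs : ℕ → p → ℝ,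
    x 0 ∈ X → xs 0 ∈ X → (∀ k, w k ∈ W) → (∀ k, ws k ∈ W) →
    (∀ k, x (k + 1) = f (x k, w k)) → (∀ k, z k = h (x k, w k)) →
    (∀ k, xs (k + 1) = f (xs k, ws k)) → (∀ k, zs k = h (xs k, ws k)) →
    (Summable fun k => (w k - ws k) ⬝ᵥ (w k - ws k)) →
    (Summable fun k => (z k - zs k) ⬝ᵥ (z k - zs k)) ∧
      √(∑' k, (z k - zs k) ⬝ᵥ (z k - zs k)) ≤
        γ * √(∑' k, (w k - ws k) ⬝ᵥ (w k - ws k)) + ζ (x 0) (xs 0)) ∧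
  (∀ a b, 0 ≤ ζ a b) ∧ ∀ a, ζ a a = 0

variable [Fintype n] [Fintype m] [Fintype p] [DecidableEq n] [DecidableEq m] [DecidableEq p]
  {f : (n → ℝ) × (m → ℝ) → n → ℝ} {h : (n → ℝ) × (m → ℝ) → p → ℝ} {P : Matrix n n ℝ} {γ : ℝ}
  {A : (n → ℝ) × (m → ℝ) → Matrix n n ℝ} {B : (n → ℝ) × (m → ℝ) → Matrix n m ℝ}
  {C : (n → ℝ) × (m → ℝ) → Matrix p n ℝ} {D : (n → ℝ) × (m → ℝ) → Matrix p m ℝ}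

lemma incremental_dissipation {S : Set ((n → ℝ) × (m → ℝ))} (hS : Convex ℝ S)
    (hf : ∀ y ∈ S, HasFDerivWithinAt f (blockRowCLM (A y) (B y)) S y)
    (hh : ∀ y ∈ S, HasFDerivWithinAt h (blockRowCLM (C y) (D y)) S y)
    (hP : P.PosDef) (hγ : γ ≠ 0)
    (hLMI : ∀ y ∈ S, (boundedRealMatrix P (A y) (B y) (C y) (D y) γ).PosSemidef)
    {y ys : (n → ℝ) × (m → ℝ)} (hy : y ∈ S) (hys : ys ∈ S) :
    (f y - f ys) ⬝ᵥ P⁻¹ *ᵥ (f y - f ys) + γ⁻¹ * ((h y - h ys) ⬝ᵥ (h y - h ys)) ≤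
      (y.1 - ys.1) ⬝ᵥ P⁻¹ *ᵥ (y.1 - ys.1) + γ * ((y.2 - ys.2) ⬝ᵥ (y.2 - ys.2)) := by
  refine dotProduct_inv_mulVec_add_le_of_forall_two_mul_dotProduct_le hP hγ fun u v => ?_
  obtain ⟨r, hr, mean_value⟩ := exists_mem_segment_dotProduct_sub_add_eq hS hf hh hys hy u v
  rw [mean_value]
  exact two_mul_dotProduct_add_le_of_boundedRealMatrix_posSemidef hP
    (hLMI r (hS.segment_subset hys hy hr)) u _ _ v

theorem li2_gain_analysis_general {X : Set (n → ℝ)} {W : Set (m → ℝ)} (hX : Convex ℝ X)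
    (hW : Convex ℝ W) (hfX : ∀ x ∈ X, ∀ w ∈ W, f (x, w) ∈ X)
    (hf : ∀ y ∈ X ×ˢ W, HasFDerivWithinAt f (blockRowCLM (A y) (B y)) (X ×ˢ W) y)
    (hh : ∀ y ∈ X ×ˢ W, HasFDerivWithinAt h (blockRowCLM (C y) (D y)) (X ×ˢ W) y)
    (hP : P.PosDef) (hγ : 0 < γ)
    (hLMI : ∀ y ∈ X ×ˢ W, (boundedRealMatrix P (A y) (B y) (C y) (D y) γ).PosSemidef) :
    HasIncrementalL2Gain f h X W γ fun a b => √(γ * ((a - b) ⬝ᵥ P⁻¹ *ᵥ (a - b))) := by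
  refine ⟨?_, fun a b => Real.sqrt_nonneg _, fun a => by simp⟩
  intro x xs w ws z zs hx0 hxs0 hw hws hx hz hxs hzs hw_sum
  have mem (k : ℕ) : (x k, w k) ∈ X ×ˢ W := ⟨trajectory_mem hfX hx0 hw hx k, hw k⟩
  have mem_s (k : ℕ) : (xs k, ws k) ∈ X ×ˢ W := ⟨trajectory_mem hfX hxs0 hws hxs k, hws k⟩
  have storage_nonneg (d : n → ℝ) : 0 ≤ d ⬝ᵥ P⁻¹ *ᵥ d :=
    hP.inv.posSemidef.dotProduct_mulVec_nonneg d
  refine summable_and_sqrt_tsum_le_of_dissipation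
    (V := fun k => (x k - xs k) ⬝ᵥ P⁻¹ *ᵥ (x k - xs k)) hγ (fun k => storage_nonneg _)
    (fun k => dotProduct_star_self_nonneg _) (fun k => dotProduct_star_self_nonneg _) hw_sum
    fun k => ?_
  simpa only [hx, hxs, hz, hzs] using
    incremental_dissipation (hX.prod hW) hf hh hP hγ.ne' hLMI (mem k) (mem_s k)

end IncrementalGain

/-- **Theorem 1, ℓ_{i2}-gain analysis.**  If there exist `P ≻ 0` and
`γ > 0` such that the block matrix
`[[P, A_δ P, B_δ, 0], [P A_δᵀ, P, 0, P C_δᵀ], [B_δᵀ, 0, γI, D_δᵀ], [0, C_δ P, D_δ, γI]]`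
is positive definite at every `(x,w) ∈ X × W` (with `A_δ, B_δ, C_δ, D_δ` the
Jacobians of `f` and `h`), then the system `x⁺ = f(x,w)`, `z = h(x,w)` has
incremental ℓ₂-gain bounded by `γ`, with offset
`ζ(a,b) = sqrt(γ (a−b)ᵀ P⁻¹ (a−b))` (which is nonnegative and vanishes for `a = b`). -/
theorem li2_gain_analysis
    (n m p : ℕ)
    (X : Set (Fin n → ℝ)) (W : Set (Fin m → ℝ))
    (hXopen : IsOpen X) (hXconv : Convex ℝ X)
    (hWopen : IsOpen W) (hWconv : Convex ℝ W)
    (f : (Fin n → ℝ) × (Fin m → ℝ) → (Fin n → ℝ))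
    (h : (Fin n → ℝ) × (Fin m → ℝ) → (Fin p → ℝ))
    (hf : ContDiffOn ℝ 1 f (X ×ˢ W)) (hh : ContDiffOn ℝ 1 h (X ×ˢ W))
    (hfmaps : ∀ x ∈ X, ∀ w ∈ W, f (x, w) ∈ X)
    (P : Matrix (Fin n) (Fin n) ℝ) (hP : P.PosDef)
    (γ : ℝ) (hγ : 0 < γ)
    -- the Jacobian matrices  A_δ = ∂f/∂x, B_δ = ∂f/∂w, C_δ = ∂h/∂x, D_δ = ∂h/∂w
    (Aδ : (Fin n → ℝ) → (Fin m → ℝ) → Matrix (Fin n) (Fin n) ℝ)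
    (Bδ : (Fin n → ℝ) → (Fin m → ℝ) → Matrix (Fin n) (Fin m) ℝ)
    (Cδ : (Fin n → ℝ) → (Fin m → ℝ) → Matrix (Fin p) (Fin n) ℝ)
    (Dδ : (Fin n → ℝ) → (Fin m → ℝ) → Matrix (Fin p) (Fin m) ℝ)
    (hAδ : ∀ x w, Aδ x w = Matrix.of fun i j => fderiv ℝ f (x, w) (Pi.single j 1, 0) i)
    (hBδ : ∀ x w, Bδ x w = Matrix.of fun i j => fderiv ℝ f (x, w) (0, Pi.single j 1) i)
    (hCδ : ∀ x w, Cδ x w = Matrix.of fun i j => fderiv ℝ h (x, w) (Pi.single j 1, 0) i)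
    (hDδ : ∀ x w, Dδ x w = Matrix.of fun i j => fderiv ℝ h (x, w) (0, Pi.single j 1) i)
    -- the matrix inequality (4)
    (hLMI : ∀ x ∈ X, ∀ w ∈ W,
      (Matrix.fromBlocks
        (Matrix.fromBlocks P (Aδ x w * P) (P * (Aδ x w)ᵀ) P)
        (Matrix.fromBlocks (Bδ x w) 0 0 (P * (Cδ x w)ᵀ))
        (Matrix.fromBlocks (Bδ x w)ᵀ 0 0 (Cδ x w * P))
        (Matrix.fromBlocks (γ • (1 : Matrix (Fin m) (Fin m) ℝ)) (Dδ x w)ᵀ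
          (Dδ x w) (γ • (1 : Matrix (Fin p) (Fin p) ℝ)))).PosDef) :
    -- conclusion: incremental ℓ₂-gain bound
    (∀ x xs : ℕ → Fin n → ℝ, ∀ w ws : ℕ → Fin m → ℝ, ∀ z zs : ℕ → Fin p → ℝ,
      x 0 ∈ X → xs 0 ∈ X → (∀ k, w k ∈ W) → (∀ k, ws k ∈ W) →
      (∀ k, x (k + 1) = f (x k, w k)) → (∀ k, z k = h (x k, w k)) →
      (∀ k, xs (k + 1) = f (xs k, ws k)) → (∀ k, zs k = h (xs k, ws k)) →
      (Summable fun k => (w k - ws k) ⬝ᵥ (w k - ws k)) →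
      (Summable fun k => (z k - zs k) ⬝ᵥ (z k - zs k)) ∧
        Real.sqrt (∑' k, (z k - zs k) ⬝ᵥ (z k - zs k)) ≤
          γ * Real.sqrt (∑' k, (w k - ws k) ⬝ᵥ (w k - ws k)) +
            Real.sqrt (γ * ((x 0 - xs 0) ⬝ᵥ P⁻¹.mulVec (x 0 - xs 0)))) ∧
    -- the offset function ζ is nonnegative and vanishes on the diagonal
    (∀ a b : Fin n → ℝ,
      0 ≤ Real.sqrt (γ * ((a - b) ⬝ᵥ P⁻¹.mulVec (a - b)))) ∧
    (∀ a : Fin n → ℝ,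
      Real.sqrt (γ * ((a - a) ⬝ᵥ P⁻¹.mulVec (a - a))) = 0) := by
  exact li2_gain_analysis_general (A := fun y => Aδ y.1 y.2) (B := fun y => Bδ y.1 y.2)
    (C := fun y => Cδ y.1 y.2) (D := fun y => Dδ y.1 y.2) hXconv hWconv hfmaps
    (fun y hy => by
      simpa only [hAδ, hBδ] using hasFDerivWithinAt_blockRowCLM_fderiv (hXopen.prod hWopen)
        (hf.differentiableOn one_ne_zero) hy)
    (fun y hy => by
      simpa only [hCδ, hDδ] using hasFDerivWithinAt_blockRowCLM_fderiv (hXopen.prod hWopen)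
        (hh.differentiableOn one_ne_zero) hy)
    hP hγ fun y hy => (hLMI y.1 hy.1 y.2 hy.2).posSemidef
end
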